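/- Set P_n = ∑_{m=n+1}^∞ v_m/|γ_m|² and, for n with P_n > 0, define g_n(z) = P_n^{-1/2} ∑_{m=n+1}^∞ v_m/(conj(γ_m)(z−γ_m)). Then g_n has unit norm in 𝓗(Γ,v) (its coefficient sequence has ‖·‖_v-norm 1), and there exist constants c, C > 0 depending only on the sparseness constant inf_n |γ_{n+1}|/|γ_n| such that for every N ≥ 1, every z ∈ Ω_N, and every n > N one has c·P_n^{1/2} ≤ |g_n(z)| ≤ C·P_n^{1/2}. In particular, g_n(z) → 0 as n → ∞ for every z ∈ ⋃_N Ω_N. -/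

import Mathlib

open MeasureTheory Filter Topology
open scoped ENNReal NNReal

noncomputable section

/-! Sequences are indexed by `ℕ`, with the Lean index `n : ℕ` corresponding to the
paper's index `n + 1` (so `γ 0` is the paper's `γ_1`, `Omega γ 0` is the paper's `Ω_1`,
the paper's partial sum `∑_{m=1}^{n} v_m` is `∑ m ∈ Finset.range (n+1), v m`, and the
paper's tail `∑_{m=n+1}^∞ c_m` is `∑' m : ℕ, c (n+1+m)`). -/

/-- The annular shells `Ω_n` (here `Omega γ 0` is the paper's `Ω_1`). -/
def Omega (γ : ℕ → ℂ) : ℕ → Set ℂ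
  | 0 => {z : ℂ | ‖z‖ < (‖γ 0‖ + ‖γ 1‖) / 2}
  | n + 1 => {z : ℂ | (‖γ n‖ + ‖γ (n + 1)‖) / 2 ≤ ‖z‖ ∧ ‖z‖ < (‖γ (n + 1)‖ + ‖γ (n + 2)‖) / 2}

/-- The sparseness condition `inf_n |γ_{n+1}|/|γ_n| > 1`. -/
def Sparse (γ : ℕ → ℂ) : Prop := ∃ c : ℝ, 1 < c ∧ ∀ n, c * ‖γ n‖ ≤ ‖γ (n + 1)‖

/-- The admissibility condition `∑_n v_n/(1+|γ_n|²) < ∞`. -/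
def Admissible (γ : ℕ → ℂ) (v : ℕ → ℝ) : Prop :=
  Summable fun n => v n / (1 + ‖γ n‖ ^ 2)

/-- Membership in `ℓ²_v`. -/
def MemL2v (v : ℕ → ℝ) (a : ℕ → ℂ) : Prop := Summable fun n => ‖a n‖ ^ 2 * v n

/-- The squared norm `‖a‖²_v = ∑_n |a_n|² v_n`. -/
def normSqV (v : ℕ → ℝ) (a : ℕ → ℂ) : ℝ := ∑' n, ‖a n‖ ^ 2 * v n

/-- The set `(Γ,v)* = {z : ∑_n v_n/|z-γ_n|² < ∞}`. -/
def GammaStar (γ : ℕ → ℂ) (v : ℕ → ℝ) : Set ℂ :=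
  {z : ℂ | Summable fun n => v n / ‖z - γ n‖ ^ 2}

/-- The function of `𝓗(Γ,v)` with coefficient sequence `a`:
`f(z) = ∑_n a_n v_n/(z-γ_n)`. -/
def Hfun (γ : ℕ → ℂ) (v : ℕ → ℝ) (a : ℕ → ℂ) (z : ℂ) : ℂ :=
  ∑' n, a n * (v n : ℂ) / (z - γ n)

/-- `μ` is a Carleson measure for `𝓗(Γ,v)`:
`∫_ℂ |f|² dμ ≤ C ‖a‖²_v` for every `f ∈ 𝓗(Γ,v)` with coefficients `a ∈ ℓ²_v`. -/
def IsCarleson (γ : ℕ → ℂ) (v : ℕ → ℝ) (μ : Measure ℂ) : Prop :=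
  ∃ C : ℝ, 0 < C ∧ ∀ a : ℕ → ℂ, MemL2v v a →
    ∫⁻ z, (‖Hfun γ v a z‖₊ : ℝ≥0∞) ^ 2 ∂μ ≤ ENNReal.ofReal (C * normSqV v a)

/-- The sequence `(a k)` of coefficient sequences converges weakly to zero in `ℓ²_v`:
it is norm bounded and `∑_n a^{(k)}_n v_n conj(b_n) → 0` for every `b ∈ ℓ²_v`. -/
def WeaklyNull (v : ℕ → ℝ) (a : ℕ → ℕ → ℂ) : Prop :=
  (∃ M : ℝ, ∀ k, normSqV v (a k) ≤ M) ∧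
    ∀ b : ℕ → ℂ, MemL2v v b →
      Tendsto (fun k => ∑' n, a k n * (v n : ℂ) * (starRingEnd ℂ) (b n)) atTop (𝓝 0)

/-- `μ` is a compact (vanishing) Carleson measure for `𝓗(Γ,v)`: it is Carleson and
`∫_ℂ |f_k|² dμ → 0` for every weakly null sequence in `𝓗(Γ,v)`. -/
def IsCompactCarleson (γ : ℕ → ℂ) (v : ℕ → ℝ) (μ : Measure ℂ) : Prop :=
  IsCarleson γ v μ ∧
    ∀ a : ℕ → ℕ → ℂ, (∀ k, MemL2v v (a k)) → WeaklyNull v a →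
      Tendsto (fun k => ∫⁻ z, (‖Hfun γ v (a k) z‖₊ : ℝ≥0∞) ^ 2 ∂μ) atTop (𝓝 0)

/-- The local quantity `∫_{Ω_n} v_n/|z-γ_n|² dμ(z)`. -/
def localTerm (γ : ℕ → ℂ) (v : ℕ → ℝ) (μ : Measure ℂ) (n : ℕ) : ℝ≥0∞ :=
  ∫⁻ z in Omega γ n, ENNReal.ofReal (v n / ‖z - γ n‖ ^ 2) ∂μ

/-- The global quantity
`(∑_{m=1}^n v_m)·(∑_{m=n+1}^∞ ∫_{Ω_m} |z|⁻² dμ) + (∑_{m=n+1}^∞ v_m/|γ_m|²)·(∑_{m=1}^n μ(Ω_m))`. -/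
def globalTerm (γ : ℕ → ℂ) (v : ℕ → ℝ) (μ : Measure ℂ) (n : ℕ) : ℝ≥0∞ :=
  ENNReal.ofReal (∑ m ∈ Finset.range (n + 1), v m) *
      (∑' m : ℕ, ∫⁻ z in Omega γ (n + 1 + m), ENNReal.ofReal (1 / ‖z‖ ^ 2) ∂μ) +
    ENNReal.ofReal (∑' m : ℕ, v (n + 1 + m) / ‖γ (n + 1 + m)‖ ^ 2) *
      (∑ m ∈ Finset.range (n + 1), μ (Omega γ m))

/-- The tail `P_n = ∑_{m=n+1}^∞ v_m/|γ_m|²`. -/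
def Ptail (γ : ℕ → ℂ) (v : ℕ → ℝ) (n : ℕ) : ℝ :=
  ∑' m, v (n + 1 + m) / ‖γ (n + 1 + m)‖ ^ 2

/-- The coefficient sequence of the test function
`g_n(z) = P_n^{-1/2} ∑_{m=n+1}^∞ v_m/(conj(γ_m)(z-γ_m))`, namely
`a_m = P_n^{-1/2}/conj(γ_m)` for `m > n` and `a_m = 0` otherwise;
thus `g_n = Hfun γ v (gCoeff γ v n)`. -/
def gCoeff (γ : ℕ → ℂ) (v : ℕ → ℝ) (n : ℕ) : ℕ → ℂ := fun m =>
  if n < m then ((Real.sqrt (Ptail γ v n) : ℂ))⁻¹ / (starRingEnd ℂ) (γ m) else 0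

/-!
Since `1 / (conj γ * (z - γ)) = -(1 - z / γ)⁻¹ / |γ|²`, the function `-P_n^{1/2} g_n(z)` is the sum
of the numbers `(1 - z / γ_m)⁻¹`, `m > n`, with the positive weights `v_m / |γ_m|²` of total mass
`P_n`. Sparseness gives `|z / γ_m| ≤ r = (1 + δ⁻¹) / 2 < 1` for `z ∈ Ω_N` and `m > n > N`. The map
`w ↦ (1 - w)⁻¹` sends the disk `|w| ≤ r` into the disk with diameter `[(1 + r)⁻¹, (1 - r)⁻¹]`, so
that the summands have modulus at most `(1 - r)⁻¹`, while their real parts are at least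
`(1 + r)⁻¹`, which rules out cancellation.
-/

section InvOneSub

variable {r : ℝ}

lemma norm_inv_one_sub_le {𝕜 : Type*} [NormedDivisionRing 𝕜] {w : 𝕜} (hw : ‖w‖ ≤ r)
    (hr : r < 1) : ‖(1 - w)⁻¹‖ ≤ (1 - r)⁻¹ := by
  rw [norm_inv]
  refine inv_anti₀ (sub_pos.2 hr) ?_
  calc 1 - r ≤ ‖(1 : 𝕜)‖ - ‖w‖ := by rw [norm_one]; gcongr
    _ ≤ ‖1 - w‖ := norm_sub_norm_le 1 w

lemma inv_one_add_le_re_inv_one_sub {w : ℂ} (hw : ‖w‖ ≤ r) (hr : r < 1) :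
    (1 + r)⁻¹ ≤ ((1 - w)⁻¹).re := by
  have hw_ne : 1 - w ≠ 0 := sub_ne_zero.2 fun h => by
    rw [← h, norm_one] at hw
    exact hr.not_ge hw
  have hr_nonneg : 0 ≤ r := (norm_nonneg w).trans hw
  have hre : 0 ≤ r + w.re := by linarith [neg_le_of_abs_le (w.abs_re_le_norm.trans hw)]
  have hnormSq : w.re * w.re + w.im * w.im ≤ r ^ 2 := by
    rw [← Complex.normSq_apply, Complex.normSq_eq_norm_sq]
    gcongr
  rw [Complex.inv_re, inv_eq_one_div, div_le_div_iff₀ (by positivity) (Complex.normSq_pos.2 hw_ne),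
    Complex.normSq_apply]
  simp only [Complex.sub_re, Complex.sub_im, Complex.one_re, Complex.one_im]
  -- The difference of the two sides is at least `(1 - r) * (r + re w)`.
  nlinarith [mul_nonneg (sub_nonneg.2 hr.le) hre]

variable {ι : Type*} {p : ι → ℝ}

lemma norm_ofReal_mul_inv_one_sub_le {𝕜 : Type*} [RCLike 𝕜] {w : ι → 𝕜} (hp : ∀ i, 0 ≤ p i)
    (hw : ∀ i, ‖w i‖ ≤ r) (hr : r < 1) (i : ι) :
    ‖(p i : 𝕜) * (1 - w i)⁻¹‖ ≤ (1 - r)⁻¹ * p i := by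
  rw [norm_mul, RCLike.norm_of_nonneg (hp i), mul_comm]
  exact mul_le_mul_of_nonneg_right (norm_inv_one_sub_le (hw i) hr) (hp i)

lemma norm_tsum_ofReal_mul_inv_one_sub_le {𝕜 : Type*} [RCLike 𝕜] {w : ι → 𝕜}
    (hp : ∀ i, 0 ≤ p i) (hsum : Summable p) (hw : ∀ i, ‖w i‖ ≤ r) (hr : r < 1) :
    ‖∑' i, (p i : 𝕜) * (1 - w i)⁻¹‖ ≤ (1 - r)⁻¹ * ∑' i, p i :=
  tsum_of_norm_bounded (hsum.hasSum.mul_left _) (norm_ofReal_mul_inv_one_sub_le hp hw hr)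

lemma le_norm_tsum_ofReal_mul_inv_one_sub {w : ι → ℂ} (hp : ∀ i, 0 ≤ p i) (hsum : Summable p)
    (hw : ∀ i, ‖w i‖ ≤ r) (hr : r < 1) :
    (1 + r)⁻¹ * ∑' i, p i ≤ ‖∑' i, (p i : ℂ) * (1 - w i)⁻¹‖ := by
  have hsummable : Summable fun i => (p i : ℂ) * (1 - w i)⁻¹ :=
    (hsum.mul_left _).of_norm_bounded (norm_ofReal_mul_inv_one_sub_le hp hw hr)
  have hre (i : ι) : (1 + r)⁻¹ * p i ≤ ((p i : ℂ) * (1 - w i)⁻¹).re := by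
    rw [Complex.re_ofReal_mul, mul_comm]
    exact mul_le_mul_of_nonneg_left (inv_one_add_le_re_inv_one_sub (hw i) hr) (hp i)
  calc (1 + r)⁻¹ * ∑' i, p i
      ≤ (∑' i, (p i : ℂ) * (1 - w i)⁻¹).re :=
        hasSum_le hre (hsum.hasSum.mul_left _) (Complex.hasSum_re hsummable.hasSum)
    _ ≤ ‖∑' i, (p i : ℂ) * (1 - w i)⁻¹‖ := Complex.re_le_norm _

end InvOneSub

lemma tsum_eq_tsum_nat_add_of_forall_lt_eq_zero {M : Type*} [AddCommMonoid M]
    [TopologicalSpace M] {f : ℕ → M} {k : ℕ} (hf : ∀ m < k, f m = 0) :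
    ∑' m, f m = ∑' m, f (k + m) := by
  refine ((add_right_injective k).tsum_eq fun m hm => ?_).symm
  have hkm : k ≤ m := not_lt.1 fun h => hm (hf m h)
  exact ⟨m - k, Nat.add_sub_cancel' hkm⟩

section TestFunctions

variable {γ : ℕ → ℂ} {v : ℕ → ℝ}

lemma Admissible.summable_div_norm_sq {ρ : ℝ} (ha : Admissible γ v) (hρ : 0 < ρ)
    (hγ : ∀ n, ρ ≤ ‖γ n‖) : Summable fun n => v n / ‖γ n‖ ^ 2 := by
  refine (ha.norm.mul_left (1 + 1 / ρ ^ 2)).of_norm_bounded fun n => ?_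
  have hγ_pos : 0 < ‖γ n‖ := hρ.trans_le (hγ n)
  calc ‖v n / ‖γ n‖ ^ 2‖
      = (1 + 1 / ‖γ n‖ ^ 2) * ‖v n / (1 + ‖γ n‖ ^ 2)‖ := by
        rw [norm_div, norm_div, Real.norm_of_nonneg (by positivity : 0 ≤ ‖γ n‖ ^ 2),
          Real.norm_of_nonneg (by positivity : 0 ≤ 1 + ‖γ n‖ ^ 2)]
        field_simp
        ring
    _ ≤ (1 + 1 / ρ ^ 2) * ‖v n / (1 + ‖γ n‖ ^ 2)‖ := by
        gcongr
        exact hγ n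

lemma tendsto_Ptail (γ : ℕ → ℂ) (v : ℕ → ℝ) : Tendsto (Ptail γ v) atTop (𝓝 0) := by
  have htail := (tendsto_sum_nat_add fun n => v n / ‖γ n‖ ^ 2).comp (tendsto_add_atTop_nat 1)
  refine htail.congr fun n => ?_
  simp only [Function.comp_apply, Ptail, add_comm (n + 1)]

lemma gCoeff_of_le {m n : ℕ} (h : m ≤ n) : gCoeff γ v n m = 0 :=
  if_neg h.not_gt

lemma gCoeff_of_lt {m n : ℕ} (h : n < m) :
    gCoeff γ v n m = (√(Ptail γ v n) : ℂ)⁻¹ / (starRingEnd ℂ) (γ m) :=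
  if_pos h

lemma normSqV_gCoeff {n : ℕ} (hP : 0 < Ptail γ v n) : normSqV v (gCoeff γ v n) = 1 := by
  have hterm {m : ℕ} (hm : n < m) :
      ‖gCoeff γ v n m‖ ^ 2 * v m = (Ptail γ v n)⁻¹ * (v m / ‖γ m‖ ^ 2) := by
    rw [gCoeff_of_lt hm, norm_div, norm_inv, Complex.norm_of_nonneg (Real.sqrt_nonneg _),
      Complex.norm_conj, div_pow, inv_pow, Real.sq_sqrt hP.le]
    ring
  calc normSqV v (gCoeff γ v n)
      = ∑' m, ‖gCoeff γ v n (n + 1 + m)‖ ^ 2 * v (n + 1 + m) :=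
        tsum_eq_tsum_nat_add_of_forall_lt_eq_zero fun m hm => by
          rw [gCoeff_of_le (Nat.lt_succ_iff.1 hm), norm_zero, zero_pow two_ne_zero, zero_mul]
    _ = (Ptail γ v n)⁻¹ * Ptail γ v n :=
        (tsum_congr fun m => hterm (by omega)).trans tsum_mul_left
    _ = 1 := inv_mul_cancel₀ hP.ne'

lemma inv_conj_mul_sub {a : ℂ} (ha : a ≠ 0) (z : ℂ) :
    ((starRingEnd ℂ) a * (z - a))⁻¹ = -((‖a‖ : ℂ) ^ 2)⁻¹ * (1 - z / a)⁻¹ := by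
  have hsub : 1 - z / a = -((z - a) / a) := by
    field_simp
    ring
  rw [hsub, ← Complex.mul_conj', inv_neg, inv_div, mul_inv, mul_inv]
  field_simp

lemma Hfun_gCoeff (h0 : ∀ m, γ m ≠ 0) (n : ℕ) (z : ℂ) :
    Hfun γ v (gCoeff γ v n) z = -(√(Ptail γ v n) : ℂ)⁻¹ *
      ∑' m, ((v (n + 1 + m) / ‖γ (n + 1 + m)‖ ^ 2 : ℝ) : ℂ) * (1 - z / γ (n + 1 + m))⁻¹ := by
  have hterm {m : ℕ} (hm : n < m) : gCoeff γ v n m * (v m : ℂ) / (z - γ m) =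
      -(√(Ptail γ v n) : ℂ)⁻¹ * (((v m / ‖γ m‖ ^ 2 : ℝ) : ℂ) * (1 - z / γ m)⁻¹) := by
    calc gCoeff γ v n m * (v m : ℂ) / (z - γ m)
        = (√(Ptail γ v n) : ℂ)⁻¹ * v m * ((starRingEnd ℂ) (γ m) * (z - γ m))⁻¹ := by
          rw [gCoeff_of_lt hm, mul_inv]
          ring
      _ = -(√(Ptail γ v n) : ℂ)⁻¹ * (((v m / ‖γ m‖ ^ 2 : ℝ) : ℂ) * (1 - z / γ m)⁻¹) := by
          rw [inv_conj_mul_sub (h0 m)]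
          push_cast
          ring
  rw [← tsum_mul_left, Hfun, tsum_eq_tsum_nat_add_of_forall_lt_eq_zero (k := n + 1)]
  · exact tsum_congr fun m => hterm (by omega)
  · intro m hm
    rw [gCoeff_of_le (Nat.lt_succ_iff.1 hm), zero_mul, zero_div]

lemma norm_Hfun_gCoeff_bounds {r : ℝ} (hr : r < 1) (h0 : ∀ m, γ m ≠ 0) (hv : ∀ m, 0 ≤ v m)
    (hsum : Summable fun m => v m / ‖γ m‖ ^ 2) {n : ℕ} {z : ℂ}
    (hz : ∀ m, n < m → ‖z‖ ≤ r * ‖γ m‖) :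
    (1 + r)⁻¹ * √(Ptail γ v n) ≤ ‖Hfun γ v (gCoeff γ v n) z‖ ∧
      ‖Hfun γ v (gCoeff γ v n) z‖ ≤ (1 - r)⁻¹ * √(Ptail γ v n) := by
  have hp (m : ℕ) : 0 ≤ v (n + 1 + m) / ‖γ (n + 1 + m)‖ ^ 2 := div_nonneg (hv _) (sq_nonneg _)
  have hsum_tail := hsum.comp_injective (add_right_injective (n + 1))
  have hw (m : ℕ) : ‖z / γ (n + 1 + m)‖ ≤ r := by
    rw [norm_div, div_le_iff₀ (norm_pos_iff.2 (h0 _))]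
    exact hz _ (by omega)
  have hscale (c : ℝ) : (√(Ptail γ v n))⁻¹ * (c * Ptail γ v n) = c * √(Ptail γ v n) := by
    rw [mul_left_comm, inv_mul_eq_div, Real.div_sqrt]
  rw [Hfun_gCoeff h0, norm_mul, norm_neg, norm_inv, Complex.norm_of_nonneg (Real.sqrt_nonneg _),
    ← hscale, ← hscale]
  constructor <;> gcongr
  · exact le_norm_tsum_ofReal_mul_inv_one_sub hp hsum_tail hw hr
  · exact norm_tsum_ofReal_mul_inv_one_sub_le hp hsum_tail hw hr

lemma tendsto_Hfun_gCoeff (h0 : ∀ m, γ m ≠ 0) (hγ : Tendsto (fun m => ‖γ m‖) atTop atTop)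
    (hv : ∀ m, 0 ≤ v m) (hsum : Summable fun m => v m / ‖γ m‖ ^ 2) (z : ℂ) :
    Tendsto (fun n => Hfun γ v (gCoeff γ v n) z) atTop (𝓝 0) := by
  have hbound : Tendsto (fun n => (1 - 1 / 2 : ℝ)⁻¹ * √(Ptail γ v n)) atTop (𝓝 0) := by
    simpa using (tendsto_Ptail γ v).sqrt.const_mul (1 - 1 / 2 : ℝ)⁻¹
  refine squeeze_zero_norm' ?_ hbound
  filter_upwards [eventually_forall_ge_atTop.2 (hγ.eventually_ge_atTop (2 * ‖z‖))] with n hn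
  exact (norm_Hfun_gCoeff_bounds one_half_lt_one h0 hv hsum fun m hm => by
    linarith [hn m hm.le]).2

lemma norm_lt_of_mem_Omega {N : ℕ} {z : ℂ} (hz : z ∈ Omega γ N) :
    ‖z‖ < (‖γ N‖ + ‖γ (N + 1)‖) / 2 := by
  cases N with
  | zero => exact hz
  | succ k => exact hz.2

lemma norm_le_mul_norm_of_mem_Omega {δ : ℝ} (hδ : 0 < δ) (hmono : Monotone fun n => ‖γ n‖)
    {N m : ℕ} (hsparse : δ * ‖γ N‖ ≤ ‖γ (N + 1)‖) {z : ℂ} (hz : z ∈ Omega γ N) (hm : N < m) :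
    ‖z‖ ≤ (1 + δ⁻¹) / 2 * ‖γ m‖ := by
  have hγN : ‖γ N‖ ≤ δ⁻¹ * ‖γ (N + 1)‖ := (le_inv_mul_iff₀ hδ).2 hsparse
  calc ‖z‖ ≤ (‖γ N‖ + ‖γ (N + 1)‖) / 2 := (norm_lt_of_mem_Omega hz).le
    _ ≤ (1 + δ⁻¹) / 2 * ‖γ (N + 1)‖ := by linarith
    _ ≤ (1 + δ⁻¹) / 2 * ‖γ m‖ := by
      gcongr
      exact hmono hm

end TestFunctions

/-- The test functions `g_n` have unit norm in `𝓗(Γ,v)`, and there are constants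
`c, C > 0` depending only on the sparseness constant `δ` such that
`c P_n^{1/2} ≤ |g_n(z)| ≤ C P_n^{1/2}` for all `z ∈ Ω_N` and `n > N`; in particular
`g_n(z) → 0` for every `z` in the union of the shells. -/
theorem gCoeff_unitNorm_and_estimate (δ : ℝ) (hδ : 1 < δ) :
    ∃ c C : ℝ, 0 < c ∧ 0 < C ∧
      ∀ (γ : ℕ → ℂ) (v : ℕ → ℝ),
        Function.Injective γ → (∀ n, γ n ≠ 0) → (Monotone fun n => ‖γ n‖) →
        (∀ n, δ * ‖γ n‖ ≤ ‖γ (n + 1)‖) → (∀ n, 0 < v n) → Admissible γ v →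
        (∀ n, 0 < Ptail γ v n →
          normSqV v (gCoeff γ v n) = 1) ∧
        (∀ N, ∀ z ∈ Omega γ N, ∀ n, N < n → 0 < Ptail γ v n →
          c * Real.sqrt (Ptail γ v n) ≤ ‖Hfun γ v (gCoeff γ v n) z‖ ∧
            ‖Hfun γ v (gCoeff γ v n) z‖ ≤ C * Real.sqrt (Ptail γ v n)) ∧
        (∀ z ∈ ⋃ N, Omega γ N,
          Tendsto (fun n => Hfun γ v (gCoeff γ v n) z) atTop (𝓝 0)) := by
  have hr : (1 + δ⁻¹) / 2 < 1 := by linarith [inv_lt_one_of_one_lt₀ hδ]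
  have hδ_pos : 0 < δ := one_pos.trans hδ
  refine ⟨(1 + (1 + δ⁻¹) / 2)⁻¹, (1 - (1 + δ⁻¹) / 2)⁻¹, by positivity, inv_pos.2 (sub_pos.2 hr), ?_⟩
  intro γ v _ h0 hmono hsparse hv ha
  have hv_nonneg (m : ℕ) : 0 ≤ v m := (hv m).le
  have hγ0 : 0 < ‖γ 0‖ := norm_pos_iff.2 (h0 0)
  have hsum : Summable fun m => v m / ‖γ m‖ ^ 2 :=
    ha.summable_div_norm_sq hγ0 fun m => hmono m.zero_le
  have hγ : Tendsto (fun m => ‖γ m‖) atTop atTop := tendsto_atTop_of_geom_le hγ0 hδ hsparse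
  refine ⟨fun n hP => normSqV_gCoeff hP, fun N z hz n hn _ => ?_,
    fun z _ => tendsto_Hfun_gCoeff h0 hγ hv_nonneg hsum z⟩
  exact norm_Hfun_gCoeff_bounds hr h0 hv_nonneg hsum fun m hm =>
    norm_le_mul_norm_of_mem_Omega hδ_pos hmono (hsparse N) hz (hn.trans hm)
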